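/- Let n ≥ 2, let A be the Cartan matrix of type A_n, and let ι be an admissible sequence in I = {1,…,n} adapted to A. Then Ξ_ι = Tab_{A,ι}, i.e. the set of all linear forms obtained by applying finitely many operators S_k to the coordinate functions x_{j_0} coincides exactly with the set of column tableaux of type A. -/

import Mathlib

noncomputable section

/-- The coordinate linear form `x_k` (as a coefficient vector). -/
def xc (k : ℕ) : ℕ → ℚ := fun l => if l = k then 1 else 0

/-- Cartan matrix of type `A_n`. -/
def cartanA (_n : ℕ) (i j : ℕ) : ℤ :=
  if i = j then 2 else if i + 1 = j ∨ j + 1 = i then -1 else 0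

/-- Cartan matrix of type `B_n`. -/
def cartanB (n : ℕ) (i j : ℕ) : ℤ :=
  if i = j then 2
  else if i = n ∧ j = n - 1 then -2
  else if i + 1 = j ∨ j + 1 = i then -1 else 0

/-- Cartan matrix of type `C_n`. -/
def cartanC (n : ℕ) (i j : ℕ) : ℤ :=
  if i = j then 2
  else if i = n - 1 ∧ j = n then -2
  else if i + 1 = j ∨ j + 1 = i then -1 else 0

/-- Cartan matrix of type `D_n`. -/
def cartanD (n : ℕ) (i j : ℕ) : ℤ :=
  if i = j then 2
  else if (i = n - 1 ∧ j = n) ∨ (i = n ∧ j = n - 1) then 0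
  else if (i + 1 = j ∨ j + 1 = i) ∨ (i = n ∧ j = n - 2) ∨ (i = n - 2 ∧ j = n) then -1
  else 0

/-- `ι` (with positions indexed by `k ≥ 1`) takes values in `{1,…,n}`, has no two equal
consecutive entries, and every index occurs infinitely often. -/
def Admissible (n : ℕ) (ι : ℕ → ℕ) : Prop :=
  (∀ k, 1 ≤ k → 1 ≤ ι k ∧ ι k ≤ n) ∧
  (∀ k, 1 ≤ k → ι k ≠ ι (k + 1)) ∧
  (∀ i, 1 ≤ i → i ≤ n → ∀ N, ∃ k, N ≤ k ∧ ι k = i)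

/-- `k^+`: the next position after `k` carrying the same letter. -/
def kplus (ι : ℕ → ℕ) (k : ℕ) : ℕ := sInf {l | k < l ∧ ι l = ι k}

/-- `k^-`: the previous position (`≥ 1`) carrying the same letter, `0` if none. -/
def kminus (ι : ℕ → ℕ) (k : ℕ) : ℕ := sSup {l | 0 < l ∧ l < k ∧ ι l = ι k}

/-- The linear form `β_k` (with `β_0 = 0`). -/
def beta (A : ℕ → ℕ → ℤ) (ι : ℕ → ℕ) (k : ℕ) : ℕ → ℚ :=
  if k = 0 then 0
  else xc k + (∑ j ∈ Finset.Ioo k (kplus ι k), (A (ι k) (ι j) : ℚ) • xc j) + xc (kplus ι k)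

/-- The piecewise-linear operator `S_k`. -/
def Sop (A : ℕ → ℕ → ℤ) (ι : ℕ → ℕ) (k : ℕ) (φ : ℕ → ℚ) : ℕ → ℚ :=
  if 0 < φ k then φ - φ k • beta A ι k
  else φ - φ k • beta A ι (kminus ι k)

/-- Membership in `Ξ_ι`: forms obtained from some `x_{j_0}` by finitely many operators `S_k`. -/
inductive XiMem (A : ℕ → ℕ → ℤ) (ι : ℕ → ℕ) : (ℕ → ℚ) → Prop
  | base (k : ℕ) (hk : 1 ≤ k) : XiMem A ι (xc k)
  | step (k : ℕ) (hk : 1 ≤ k) (φ : ℕ → ℚ) (h : XiMem A ι φ) : XiMem A ι (Sop A ι k φ)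

/-- The set `Ξ_ι`. -/
def Xi (A : ℕ → ℕ → ℤ) (ι : ℕ → ℕ) : Set (ℕ → ℚ) := { φ | XiMem A ι φ }

/-- Forms obtained from a set `g` of generators by finitely many operators `S_k`. -/
inductive XiMemFrom (A : ℕ → ℕ → ℤ) (ι : ℕ → ℕ) (g : Set (ℕ → ℚ)) : (ℕ → ℚ) → Prop
  | base (φ : ℕ → ℚ) (h : φ ∈ g) : XiMemFrom A ι g φ
  | step (k : ℕ) (hk : 1 ≤ k) (φ : ℕ → ℚ) (h : XiMemFrom A ι g φ) :
      XiMemFrom A ι g (Sop A ι k φ)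

/-- `ι` is adapted to the Cartan matrix `A`: for `i ≠ j` with `a_{i,j} ≠ 0`, consecutive
members of the subsequence of `ι` consisting of the letters `i`, `j` are distinct. -/
def Adapted (n : ℕ) (A : ℕ → ℕ → ℤ) (ι : ℕ → ℕ) : Prop :=
  ∀ i j, 1 ≤ i → i ≤ n → 1 ≤ j → j ≤ n → i ≠ j → A i j ≠ 0 →
    ∀ k l, 1 ≤ k → k < l → (ι k = i ∨ ι k = j) → (ι l = i ∨ ι l = j) →
      (∀ m, k < m → m < l → ι m ≠ i ∧ ι m ≠ j) → ι k ≠ ι l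

/-- Position of the first occurrence of the letter `i` in `ι`. -/
def firstOcc (ι : ℕ → ℕ) (i : ℕ) : ℕ := sInf {k | 1 ≤ k ∧ ι k = i}

/-- `p_{i,j} = 1` iff the first occurrence of `i` precedes the first occurrence of `j`. -/
def pval (ι : ℕ → ℕ) (i j : ℕ) : ℕ := if firstOcc ι i < firstOcc ι j then 1 else 0

/-- The function `P(k)` for types A, B, C (and `P(k) = 0` for `k > n`, `k ≤ 1`). -/
def PABC (ι : ℕ → ℕ) (n k : ℕ) : ℕ :=
  if k ≤ n then ∑ t ∈ Finset.Icc 2 k, pval ι t (t - 1) else 0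

/-- The function `P(k)` for type D. -/
def PD (ι : ℕ → ℕ) (n k : ℕ) : ℕ :=
  if k = n then (∑ t ∈ Finset.Icc 2 (n - 2), pval ι t (t - 1)) + pval ι n (n - 2)
  else if k ≤ n then ∑ t ∈ Finset.Icc 2 k, pval ι t (t - 1) else 0

/-- `occPos ι j s`: the position of the `s`-th occurrence of the letter `j` in `ι`
(`0` for `s = 0`). -/
def occPos (ι : ℕ → ℕ) (j : ℕ) : ℕ → ℕ
  | 0 => 0
  | s + 1 => sInf {k | occPos ι j s < k ∧ ι k = j}

/-- The double-indexed coordinate form `x_{s,j}`, with the conventions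
`x_{s,0} = x_{s,n+1} = 0` and `x_{s,j} = 0` for `s ≤ 0`. -/
def xsj (ι : ℕ → ℕ) (n : ℕ) (s : ℤ) (j : ℕ) : ℕ → ℚ :=
  if 1 ≤ s ∧ 1 ≤ j ∧ j ≤ n then xc (occPos ι j s.toNat) else 0

/-- The double-indexed form `β_{s,j}`. -/
def betasj (A : ℕ → ℕ → ℤ) (ι : ℕ → ℕ) (s : ℤ) (j : ℕ) : ℕ → ℚ :=
  beta A ι (occPos ι j s.toNat)

/-- The double-indexed operator `S_{m,j}`. -/
def Ssj (A : ℕ → ℕ → ℤ) (ι : ℕ → ℕ) (m j : ℕ) (φ : ℕ → ℚ) : ℕ → ℚ :=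
  Sop A ι (occPos ι j m) φ

/- Entries of the ordered sets `J_X` are encoded as natural numbers:
an unbarred entry `j ∈ {1,…,n}` is encoded as `j`, a barred entry `j̄` is
encoded as `2n+1-j` (so that `n̄ = n+1, …, 1̄ = 2n` and the total order of
`J_B = J_C` is the numerical order), and the extra symbol `ovl(n+1)` of
types C and D is encoded as `0`. -/

/-- The box of type A. -/
def boxA (ι : ℕ → ℕ) (n : ℕ) (s : ℤ) (j : ℕ) : ℕ → ℚ :=
  xsj ι n (s + (PABC ι n j : ℤ)) j - xsj ι n (s + (PABC ι n (j - 1) : ℤ) + 1) (j - 1)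

/-- The box of type B. -/
def boxB (ι : ℕ → ℕ) (n : ℕ) (s : ℤ) (e : ℕ) : ℕ → ℚ :=
  if e ≤ n then
    xsj ι n (s + (PABC ι n e : ℤ)) e - xsj ι n (s + (PABC ι n (e - 1) : ℤ) + 1) (e - 1)
  else
    xsj ι n (s + (PABC ι n (2 * n - e) : ℤ) + (n : ℤ) - ((2 * n + 1 - e : ℕ) : ℤ) + 1)
        (2 * n - e)
      - xsj ι n (s + (PABC ι n (2 * n + 1 - e) : ℤ) + (n : ℤ) - ((2 * n + 1 - e : ℕ) : ℤ) + 1)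
          (2 * n + 1 - e)

/-- The box of type C (`ovl(n+1)` encoded as `0`). -/
def boxC (ι : ℕ → ℕ) (n : ℕ) (s : ℤ) (e : ℕ) : ℕ → ℚ :=
  if e = 0 then xsj ι n (s + (PABC ι n n : ℤ)) n
  else if e < n then
    xsj ι n (s + (PABC ι n e : ℤ)) e - xsj ι n (s + (PABC ι n (e - 1) : ℤ) + 1) (e - 1)
  else if e = n then
    (2 : ℚ) • xsj ι n (s + (PABC ι n n : ℤ)) n
      - xsj ι n (s + (PABC ι n (n - 1) : ℤ) + 1) (n - 1)
  else if e = n + 1 then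
    xsj ι n (s + (PABC ι n (n - 1) : ℤ) + 1) (n - 1)
      - (2 : ℚ) • xsj ι n (s + (PABC ι n n : ℤ) + 1) n
  else
    xsj ι n (s + (PABC ι n (2 * n - e) : ℤ) + (n : ℤ) - ((2 * n + 1 - e : ℕ) : ℤ) + 1)
        (2 * n - e)
      - xsj ι n (s + (PABC ι n (2 * n + 1 - e) : ℤ) + (n : ℤ) - ((2 * n + 1 - e : ℕ) : ℤ) + 1)
          (2 * n + 1 - e)

/-- The box of type D (`ovl(n+1)` encoded as `0`, `n̄` as `n+1`, `ovl(n-1)` as `n+2`). -/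
def boxD (ι : ℕ → ℕ) (n : ℕ) (s : ℤ) (e : ℕ) : ℕ → ℚ :=
  if e = 0 then xsj ι n (s + (PD ι n n : ℤ)) n
  else if e ≤ n - 2 then
    xsj ι n (s + (PD ι n e : ℤ)) e - xsj ι n (s + (PD ι n (e - 1) : ℤ) + 1) (e - 1)
  else if e = n - 1 then
    xsj ι n (s + (PD ι n (n - 1) : ℤ)) (n - 1) + xsj ι n (s + (PD ι n n : ℤ)) n
      - xsj ι n (s + (PD ι n (n - 2) : ℤ) + 1) (n - 2)
  else if e = n then
    xsj ι n (s + (PD ι n n : ℤ)) n - xsj ι n (s + (PD ι n (n - 1) : ℤ) + 1) (n - 1)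
  else if e = n + 1 then
    xsj ι n (s + (PD ι n (n - 1) : ℤ)) (n - 1) - xsj ι n (s + (PD ι n n : ℤ) + 1) n
  else if e = n + 2 then
    xsj ι n (s + (PD ι n (n - 2) : ℤ) + 1) (n - 2)
      - xsj ι n (s + (PD ι n (n - 1) : ℤ) + 1) (n - 1)
      - xsj ι n (s + (PD ι n n : ℤ) + 1) n
  else
    xsj ι n (s + (PD ι n (2 * n - e) : ℤ) + (n : ℤ) - ((2 * n + 1 - e : ℕ) : ℤ)) (2 * n - e)
      - xsj ι n (s + (PD ι n (2 * n + 1 - e) : ℤ) + (n : ℤ) - ((2 * n + 1 - e : ℕ) : ℤ))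
          (2 * n + 1 - e)

/-- The column tableau `[j_1,…,j_k]_s = Σ_{i=1}^k box_{s+k-i}(j_i)`. -/
def tab (box : ℤ → ℕ → ℕ → ℚ) (s : ℤ) (k : ℕ) (j : ℕ → ℕ) : ℕ → ℚ :=
  ∑ i ∈ Finset.Icc 1 k, box (s + (k : ℤ) - (i : ℤ)) (j i)

/-- The set `Tab_{A,ι}`. -/
def TabA (ι : ℕ → ℕ) (n : ℕ) : Set (ℕ → ℚ) :=
  { T | ∃ (k : ℕ) (s : ℤ) (j : ℕ → ℕ),
      1 ≤ k ∧ k ≤ n ∧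
      (∀ i, 1 ≤ i → i ≤ k → 1 ≤ j i ∧ j i ≤ n + 1) ∧
      (∀ i, 1 ≤ i → i < k → j i < j (i + 1)) ∧
      1 - (PABC ι n k : ℤ) ≤ s ∧
      T = tab (boxA ι n) s k j }

/-- `|·|` on encoded entries of `J_B = J_C`. -/
def absJ (n e : ℕ) : ℕ := if e ≤ n then e else 2 * n + 1 - e

/-- The set `Tab_{B,ι}`. -/
def TabB (ι : ℕ → ℕ) (n : ℕ) : Set (ℕ → ℚ) :=
  { T | ∃ (k : ℕ) (s : ℤ) (j : ℕ → ℕ),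
      1 ≤ k ∧ k ≤ n ∧
      (∀ i, 1 ≤ i → i ≤ k → 1 ≤ j i ∧ j i ≤ 2 * n) ∧
      (∀ i, 1 ≤ i → i < k → j i < j (i + 1)) ∧
      (k = n → ∀ l m, 1 ≤ l → l < m → m ≤ k → absJ n (j l) ≠ absJ n (j m)) ∧
      1 - (PABC ι n k : ℤ) ≤ s ∧
      T = tab (boxB ι n) s k j }

/-- Defining conditions of `Tab_{C,ι}` on the data `(k,s,j)`. -/
def TabCcond (ι : ℕ → ℕ) (n : ℕ) (k : ℕ) (s : ℤ) (j : ℕ → ℕ) : Prop :=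
  (1 ≤ k ∧ k ≤ n - 1 ∧
    (∀ i, 1 ≤ i → i ≤ k → 1 ≤ j i ∧ j i ≤ 2 * n) ∧
    (∀ i, 1 ≤ i → i < k → j i < j (i + 1)) ∧
    1 - (PABC ι n k : ℤ) ≤ s)
  ∨
  (j 1 = 0 ∧ 1 ≤ k ∧ k ≤ n + 1 ∧
    (∀ i, 2 ≤ i → i ≤ k → n + 1 ≤ j i ∧ j i ≤ 2 * n) ∧
    (∀ i, 2 ≤ i → i < k → j i < j (i + 1)) ∧
    1 - (PABC ι n n : ℤ) ≤ s)

/-- The set `Tab_{C,ι}`. -/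
def TabC (ι : ℕ → ℕ) (n : ℕ) : Set (ℕ → ℚ) :=
  { T | ∃ k s j, TabCcond ι n k s j ∧ T = tab (boxC ι n) s k j }

/-- The partial order on (encoded) `J_D`: `a ≤ b` iff `a = b`, or `a < b` numerically and
`(a,b)` is not the incomparable pair `(n, n̄)`. -/
def leD (n a b : ℕ) : Prop := a = b ∨ (a < b ∧ ¬(a = n ∧ b = n + 1))

/-- Defining conditions of `Tab_{D,ι}` on the data `(k,s,j)`. -/
def TabDcond (ι : ℕ → ℕ) (n : ℕ) (k : ℕ) (s : ℤ) (j : ℕ → ℕ) : Prop :=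
  (1 ≤ k ∧ k ≤ n - 2 ∧
    (∀ i, 1 ≤ i → i ≤ k → 1 ≤ j i ∧ j i ≤ 2 * n) ∧
    (∀ i, 1 ≤ i → i < k → ¬ leD n (j (i + 1)) (j i)) ∧
    1 - (PD ι n k : ℤ) ≤ s)
  ∨
  (j 1 = 0 ∧ 1 ≤ k ∧ k ≤ n + 1 ∧
    (∀ i, 2 ≤ i → i ≤ k → n + 1 ≤ j i ∧ j i ≤ 2 * n) ∧
    (∀ i, 2 ≤ i → i < k → j i < j (i + 1)) ∧
    (k % 2 = 0 → 1 - (PD ι n (n - 1) : ℤ) ≤ s) ∧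
    (k % 2 = 1 → 1 - (PD ι n n : ℤ) ≤ s))

/-- The set `Tab_{D,ι}`. -/
def TabD (ι : ℕ → ℕ) (n : ℕ) : Set (ℕ → ℚ) :=
  { T | ∃ k s j, TabDcond ι n k s j ∧ T = tab (boxD ι n) s k j }

end

section helpers

variable {n : ℕ} {ι : ℕ → ℕ}

theorem occPos_spec (hadm : Admissible n ι) {j : ℕ} (h1 : 1 ≤ j) (h2 : j ≤ n) (s : ℕ) :
    occPos ι j s < occPos ι j (s + 1) ∧ ι (occPos ι j (s + 1)) = j := by
  have hne : {k | occPos ι j s < k ∧ ι k = j}.Nonempty := by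
    obtain ⟨k, hk, hk'⟩ := hadm.2.2 j h1 h2 (occPos ι j s + 1)
    exact ⟨k, by omega, hk'⟩
  exact Nat.sInf_mem hne

theorem occPos_mono (hadm : Admissible n ι) {j : ℕ} (h1 : 1 ≤ j) (h2 : j ≤ n) :
    StrictMono (occPos ι j) :=
  strictMono_nat_of_lt_succ fun s => (occPos_spec hadm h1 h2 s).1

theorem occPos_letter (hadm : Admissible n ι) {j : ℕ} (h1 : 1 ≤ j) (h2 : j ≤ n) {s : ℕ}
    (hs : 1 ≤ s) : ι (occPos ι j s) = j := by
  obtain ⟨s, rfl⟩ : ∃ t, s = t + 1 := ⟨s - 1, by omega⟩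
  exact (occPos_spec hadm h1 h2 s).2

theorem occPos_pos (hadm : Admissible n ι) {j : ℕ} (h1 : 1 ≤ j) (h2 : j ≤ n) {s : ℕ}
    (hs : 1 ≤ s) : 1 ≤ occPos ι j s := by
  have := occPos_mono hadm h1 h2 (show 0 < s by omega)
  simp only [occPos] at this
  omega

theorem occPos_le {j : ℕ} {s k : ℕ} (h : occPos ι j s < k) (hk : ι k = j) :
    occPos ι j (s + 1) ≤ k := Nat.sInf_le ⟨h, hk⟩

theorem occPos_surj (hadm : Admissible n ι) {k : ℕ} (hk : 1 ≤ k) :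
    ∃ s, 1 ≤ s ∧ occPos ι (ι k) s = k := by
  obtain ⟨h1, h2⟩ := hadm.1 k hk
  have hm := occPos_mono hadm h1 h2
  have hex : ∃ s, k ≤ occPos ι (ι k) s := ⟨k, hm.id_le k⟩
  classical
  refine ⟨Nat.find hex, ?_, ?_⟩
  · by_contra hc
    have h0 : Nat.find hex = 0 := by omega
    have := Nat.find_spec hex
    rw [h0] at this
    simp only [occPos] at this
    omega
  · have hsp := Nat.find_spec hex
    rcases hs : Nat.find hex with _ | s
    · rw [hs] at hsp
      simp only [occPos] at hsp
      omega
    · rw [hs] at hsp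
      have hlt : ¬ k ≤ occPos ι (ι k) s := Nat.find_min hex (by omega)
      have := occPos_le (ι := ι) (j := ι k) (s := s) (k := k) (by omega) rfl
      omega

theorem kplus_occ (hadm : Admissible n ι) {j : ℕ} (h1 : 1 ≤ j) (h2 : j ≤ n) {s : ℕ}
    (hs : 1 ≤ s) : kplus ι (occPos ι j s) = occPos ι j (s + 1) := by
  unfold kplus
  rw [occPos_letter hadm h1 h2 hs]
  rfl

theorem kminus_occ (hadm : Admissible n ι) {j : ℕ} (h1 : 1 ≤ j) (h2 : j ≤ n) (s : ℕ) :
    kminus ι (occPos ι j (s + 1)) = occPos ι j s := by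
  unfold kminus
  rw [occPos_letter hadm h1 h2 (by omega : 1 ≤ s + 1)]
  have hub : ∀ l ∈ {l | 0 < l ∧ l < occPos ι j (s + 1) ∧ ι l = j}, l ≤ occPos ι j s := by
    rintro l ⟨_, hl2, hl3⟩
    by_contra hc
    have := occPos_le (ι := ι) (j := j) (s := s) (k := l) (by omega) hl3
    omega
  rcases Nat.eq_zero_or_pos s with rfl | hs
  · have : {l | 0 < l ∧ l < occPos ι j (0 + 1) ∧ ι l = j} = ∅ := by
      ext l
      simp only [Set.mem_ofPred_eq, Set.mem_empty_iff_false, iff_false]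
      intro hl
      have := hub l hl
      simp only [occPos] at this
      omega
    rw [this]
    simp [occPos]
  · apply IsGreatest.csSup_eq
    exact ⟨⟨occPos_pos hadm h1 h2 hs, (occPos_spec hadm h1 h2 s).1,
      occPos_letter hadm h1 h2 hs⟩, hub⟩

/-- Between two consecutive `i`s there is a neighbour `j`. -/
theorem between (hadm : Admissible n ι) (hadap : Adapted n (cartanA n) ι) {i j : ℕ}
    (hi1 : 1 ≤ i) (hi2 : i ≤ n) (hj1 : 1 ≤ j) (hj2 : j ≤ n) (hij : i + 1 = j ∨ j + 1 = i)
    {s : ℕ} (hs : 1 ≤ s) :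
    ∃ t, 1 ≤ t ∧ occPos ι i s < occPos ι j t ∧ occPos ι j t < occPos ι i (s + 1) := by
  by_contra hc
  push Not at hc
  have hne : i ≠ j := by omega
  have hA : cartanA n i j ≠ 0 := by
    simp [cartanA, hne, hij]
  have e1 := occPos_letter hadm hi1 hi2 hs
  have e2 := occPos_letter hadm hi1 hi2 (show 1 ≤ s + 1 by omega)
  refine hadap i j hi1 hi2 hj1 hj2 hne hA (occPos ι i s) (occPos ι i (s + 1))
    (occPos_pos hadm hi1 hi2 hs) (occPos_spec hadm hi1 hi2 s).1 (Or.inl e1) (Or.inl e2) ?_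
    (e1.trans e2.symm)
  intro m hm1 hm2
  refine ⟨fun h => ?_, fun h => ?_⟩
  · have := occPos_le (ι := ι) hm1 h
    omega
  · obtain ⟨t, ht, htm⟩ := occPos_surj hadm (show 1 ≤ m by omega)
    rw [h] at htm
    have := hc t ht (by omega)
    omega

theorem interleave (hadm : Admissible n ι) (hadap : Adapted n (cartanA n) ι) {i j : ℕ}
    (hi1 : 1 ≤ i) (hi2 : i ≤ n) (hj1 : 1 ≤ j) (hj2 : j ≤ n) (hij : i + 1 = j ∨ j + 1 = i)
    (hf : occPos ι i 1 < occPos ι j 1) (s : ℕ) :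
    occPos ι i (s + 1) < occPos ι j (s + 1) ∧ occPos ι j (s + 1) < occPos ι i (s + 2) := by
  have mi := occPos_mono hadm hi1 hi2
  have mj := occPos_mono hadm hj1 hj2
  induction s with
  | zero =>
    refine ⟨hf, ?_⟩
    obtain ⟨t, ht, h1, h2⟩ := between hadm hadap hi1 hi2 hj1 hj2 hij (le_refl 1)
    exact lt_of_le_of_lt (mj.monotone ht) h2
  | succ s ih =>
    have a : occPos ι i (s + 1 + 1) < occPos ι j (s + 1 + 1) := by
      obtain ⟨t, ht, h1, h2⟩ := between hadm hadap hj1 hj2 hi1 hi2 hij.symm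
        (show 1 ≤ s + 1 by omega)
      have : s + 1 < t := mi.lt_iff_lt.1 (ih.1.trans h1)
      exact lt_of_le_of_lt (mi.monotone (by omega)) h2
    refine ⟨a, ?_⟩
    obtain ⟨t, ht, h1, h2⟩ := between hadm hadap hi1 hi2 hj1 hj2 hij
      (show 1 ≤ s + 1 + 1 by omega)
    have : s + 1 < t := mj.lt_iff_lt.1 (ih.2.trans h1)
    exact lt_of_le_of_lt (mj.monotone (by omega)) h2

theorem occ_inj (hadm : Admissible n ι) {i j s t : ℕ} (hi1 : 1 ≤ i) (hi2 : i ≤ n)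
    (hj1 : 1 ≤ j) (hj2 : j ≤ n) (hs : 1 ≤ s) (ht : 1 ≤ t) :
    occPos ι i s = occPos ι j t ↔ i = j ∧ s = t := by
  constructor
  · intro h
    have e1 := occPos_letter hadm hi1 hi2 hs
    have e2 := occPos_letter hadm hj1 hj2 ht
    have : i = j := by rw [← e1, ← e2, h]
    subst this
    exact ⟨rfl, (occPos_mono hadm hi1 hi2).injective h⟩
  · rintro ⟨rfl, rfl⟩
    rfl

theorem first_ne (hadm : Admissible n ι) {i j : ℕ} (hi1 : 1 ≤ i) (hi2 : i ≤ n)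
    (hj1 : 1 ≤ j) (hj2 : j ≤ n) (hij : i ≠ j) : occPos ι i 1 ≠ occPos ι j 1 := by
  intro h
  exact hij ((occ_inj hadm hi1 hi2 hj1 hj2 le_rfl le_rfl).1 h).1

/-- Which occurrence of a neighbour `i` lies between consecutive `j`s. -/
theorem mem_between_iff (hadm : Admissible n ι) (hadap : Adapted n (cartanA n) ι) {i j : ℕ}
    (hi1 : 1 ≤ i) (hi2 : i ≤ n) (hj1 : 1 ≤ j) (hj2 : j ≤ n) (hij : i + 1 = j ∨ j + 1 = i)
    {s t : ℕ} (hs : 1 ≤ s) (ht : 1 ≤ t) :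
    (occPos ι j s < occPos ι i t ∧ occPos ι i t < occPos ι j (s + 1)) ↔
      t = s + pval ι i j := by
  have mi := occPos_mono hadm hi1 hi2
  have mj := occPos_mono hadm hj1 hj2
  have hne := first_ne hadm hi1 hi2 hj1 hj2 (by omega)
  obtain ⟨s, rfl⟩ : ∃ r, s = r + 1 := ⟨s - 1, by omega⟩
  have hp : pval ι i j = if occPos ι i 1 < occPos ι j 1 then 1 else 0 := rfl
  rw [hp]
  split_ifs with h
  · have a := interleave hadm hadap hi1 hi2 hj1 hj2 hij h s
    have b := interleave hadm hadap hi1 hi2 hj1 hj2 hij h (s + 1)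
    constructor
    · rintro ⟨h1, h2⟩
      have c1 : s + 1 < t := mi.lt_iff_lt.1 (a.1.trans h1)
      have c2 : t < s + 1 + 2 := mi.lt_iff_lt.1 (h2.trans b.2)
      omega
    · rintro rfl
      exact ⟨a.2, b.1⟩
  · have h' : occPos ι j 1 < occPos ι i 1 := by omega
    have a := interleave hadm hadap hj1 hj2 hi1 hi2 hij.symm h' s
    have b := interleave hadm hadap hj1 hj2 hi1 hi2 hij.symm h' (s + 1)
    constructor
    · rintro ⟨h1, h2⟩
      have c2 : t < s + 1 + 1 := mi.lt_iff_lt.1 (h2.trans b.1)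
      have c1 : s < t := by
        rcases Nat.eq_zero_or_pos s with rfl | hs0
        · omega
        · obtain ⟨r, rfl⟩ : ∃ r, s = r + 1 := ⟨s - 1, by omega⟩
          have d := interleave hadm hadap hj1 hj2 hi1 hi2 hij.symm h' r
          exact mi.lt_iff_lt.1 (d.2.trans h1)
      omega
    · rintro rfl
      exact a

theorem xsj_zero (hadm : Admissible n ι) (s : ℤ) (j : ℕ) : xsj ι n s j 0 = 0 := by
  unfold xsj
  split_ifs with h
  · have := occPos_pos hadm h.2.1 h.2.2 (show 1 ≤ s.toNat by omega)
    simp only [xc]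
    rw [if_neg (by omega)]
  · rfl

theorem xsj_occ (hadm : Admissible n ι) (s : ℤ) (j : ℕ) {i t : ℕ} (hi1 : 1 ≤ i) (hi2 : i ≤ n)
    (ht : 1 ≤ t) : xsj ι n s j (occPos ι i t) = if j = i ∧ s = t then 1 else 0 := by
  unfold xsj
  split_ifs with h h' h'
  · simp only [xc]
    rw [if_pos]
    rw [occ_inj hadm hi1 hi2 h.2.1 h.2.2 ht (by omega)]
    omega
  · simp only [xc]
    rw [if_neg]
    rw [occ_inj hadm hi1 hi2 h.2.1 h.2.2 ht (by omega)]
    omega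
  · exfalso
    omega
  · rfl

theorem form_ext (hadm : Admissible n ι) {f g : ℕ → ℚ} (h0 : f 0 = g 0)
    (h : ∀ i t, 1 ≤ i → i ≤ n → 1 ≤ t → f (occPos ι i t) = g (occPos ι i t)) : f = g := by
  funext l
  rcases Nat.eq_zero_or_pos l with rfl | hl
  · exact h0
  · obtain ⟨t, ht, e⟩ := occPos_surj hadm hl
    obtain ⟨a, b⟩ := hadm.1 l hl
    rw [← e]
    exact h _ _ a b ht

theorem pval_symm (hadm : Admissible n ι) {i j : ℕ} (hi1 : 1 ≤ i) (hi2 : i ≤ n)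
    (hj1 : 1 ≤ j) (hj2 : j ≤ n) (hij : i ≠ j) : pval ι i j + pval ι j i = 1 := by
  have := first_ne hadm hi1 hi2 hj1 hj2 hij
  have h1 : pval ι i j = if occPos ι i 1 < occPos ι j 1 then 1 else 0 := rfl
  have h2 : pval ι j i = if occPos ι j 1 < occPos ι i 1 then 1 else 0 := rfl
  rw [h1, h2]
  split_ifs <;> omega

theorem pval_le (i j : ℕ) : pval ι i j ≤ 1 := by
  unfold pval
  split_ifs <;> omega

theorem PABC_succ {c : ℕ} (h1 : 1 ≤ c) (h2 : c + 1 ≤ n) :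
    PABC ι n (c + 1) = PABC ι n c + pval ι (c + 1) c := by
  unfold PABC
  rw [if_pos h2, if_pos (by omega), Finset.sum_Icc_succ_top (by omega)]
  simp

theorem beta_apply (A : ℕ → ℕ → ℤ) {k : ℕ} (hk : k ≠ 0) (l : ℕ) :
    beta A ι k l = (if l = k then 1 else 0)
      + (if k < l ∧ l < kplus ι k then (A (ι k) (ι l) : ℚ) else 0)
      + (if l = kplus ι k then 1 else 0) := by
  unfold beta
  rw [if_neg hk]
  simp only [Pi.add_apply, Finset.sum_apply, Pi.smul_apply, xc, smul_eq_mul, mul_ite, mul_one,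
    mul_zero, Finset.sum_ite_eq, Finset.mem_Ioo]

/-- The key relation between boxes and `β`. -/
theorem box_sub (hadm : Admissible n ι) (hadap : Adapted n (cartanA n) ι) {c t : ℕ}
    (hc1 : 1 ≤ c) (hc2 : c ≤ n) (ht : 1 ≤ t) {m : ℤ} (hm : m + (PABC ι n c : ℤ) = t) :
    boxA ι n m c - boxA ι n m (c + 1) = beta (cartanA n) ι (occPos ι c t) := by
  have hpos := occPos_pos hadm hc1 hc2 ht
  have hm' : m = t - (PABC ι n c : ℤ) := by omega
  subst hm'
  have mc := occPos_mono hadm hc1 hc2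
  apply form_ext hadm
  · rw [beta_apply _ (by omega), kplus_occ hadm hc1 hc2 ht]
    have := occPos_pos hadm hc1 hc2 (show 1 ≤ t + 1 by omega)
    simp only [boxA, Pi.sub_apply, xsj_zero hadm]
    rw [if_neg (by omega), if_neg (by omega), if_neg (by omega)]
    norm_num
  · intro i r hi1 hi2 hr
    rw [beta_apply _ (by omega), kplus_occ hadm hc1 hc2 ht]
    simp only [boxA, Pi.sub_apply, xsj_occ hadm _ _ hi1 hi2 hr, Nat.add_sub_cancel,
      occ_inj hadm hi1 hi2 hc1 hc2 hr ht,
      occ_inj hadm hi1 hi2 hc1 hc2 hr (show 1 ≤ t + 1 by omega),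
      occPos_letter hadm hi1 hi2 hr, occPos_letter hadm hc1 hc2 ht]
    by_cases e1 : i = c
    · subst e1
      have : ¬ (occPos ι i t < occPos ι i r ∧ occPos ι i r < occPos ι i (t + 1)) := by
        rintro ⟨a, b⟩
        have := mc.lt_iff_lt.1 a
        have := mc.lt_iff_lt.1 b
        omega
      rw [if_neg this]
      have x1 : ¬ (i - 1 = i) := by omega
      have x2 : ¬ (i + 1 = i) := by omega
      simp only [x1, x2, false_and, true_and, if_false]
      split_ifs <;> first | (exfalso; omega) | norm_num
    · by_cases e2 : i + 1 = c ∨ c + 1 = i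
      · simp only [mem_between_iff hadm hadap hi1 hi2 hc1 hc2 e2 ht hr]
        have hA : cartanA n c i = -1 := by
          unfold cartanA
          rw [if_neg (by omega), if_pos (by omega)]
        rw [hA]
        have hsym := pval_symm hadm hi1 hi2 hc1 hc2 e1
        rcases e2 with rfl | rfl
        · have hP := PABC_succ (ι := ι) (n := n) hi1 hc2
          simp only [Nat.add_sub_cancel, true_and]
          split_ifs <;> first | (exfalso; omega) | norm_num
        · have hP := PABC_succ (ι := ι) (n := n) hc1 hi2
          split_ifs <;> first | (exfalso; omega) | norm_num
      · have hA : cartanA n c i = 0 := by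
          unfold cartanA
          rw [if_neg (by omega), if_neg (by omega)]
        rw [hA]
        split_ifs <;> first | (exfalso; omega) | norm_num

theorem tab_update (box : ℤ → ℕ → ℕ → ℚ) (s : ℤ) {k i : ℕ} (j : ℕ → ℕ) (c : ℕ)
    (h1 : 1 ≤ i) (h2 : i ≤ k) :
    tab box s k (Function.update j i c) =
      tab box s k j - box (s + (k : ℤ) - (i : ℤ)) (j i) + box (s + (k : ℤ) - (i : ℤ)) c := by
  have hi : i ∈ Finset.Icc 1 k := Finset.mem_Icc.2 ⟨h1, h2⟩
  unfold tab
  rw [← Finset.add_sum_erase _ _ hi, ← Finset.add_sum_erase _ _ hi]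
  have : ∑ x ∈ (Finset.Icc 1 k).erase i, box (s + (k : ℤ) - (x : ℤ)) (Function.update j i c x)
      = ∑ x ∈ (Finset.Icc 1 k).erase i, box (s + (k : ℤ) - (x : ℤ)) (j x) := by
    apply Finset.sum_congr rfl
    intro x hx
    rw [Function.update_of_ne (Finset.ne_of_mem_erase hx)]
  rw [this, Function.update_self]
  abel

theorem tab_id (s : ℤ) (k : ℕ) (hk : k ≤ n) :
    tab (boxA ι n) s k (fun i => i) = xsj ι n (s + (PABC ι n k : ℤ)) k := by
  induction k generalizing s with
  | zero => simp [tab, xsj]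
  | succ k ih =>
    have h := ih (s + 1) (by omega)
    unfold tab at h ⊢
    rw [Finset.sum_Icc_succ_top (by omega)]
    have e : ∀ i : ℕ, s + ((k + 1 : ℕ) : ℤ) - (i : ℤ) = s + 1 + (k : ℤ) - (i : ℤ) := by
      intro i; push_cast; ring
    simp only [e]
    rw [h]
    have e2 : s + 1 + (k : ℤ) - ((k + 1 : ℕ) : ℤ) = s := by push_cast; ring
    rw [e2]
    unfold boxA
    rw [Nat.add_sub_cancel, show s + 1 + (PABC ι n k : ℤ) = s + (PABC ι n k : ℤ) + 1 by ring]
    abel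

/-- Coefficient of a tableau at the `t`-th occurrence of `c`; `i` is the relevant row. -/
theorem tab_coeff (hadm : Admissible n ι) (s : ℤ) (k : ℕ) (j : ℕ → ℕ)
    (hj : ∀ i, 1 ≤ i → i ≤ k → 1 ≤ j i) {c t : ℕ}
    (hc1 : 1 ≤ c) (hc2 : c ≤ n) (ht : 1 ≤ t) (i : ℤ)
    (hi : i = s + k - (t - (PABC ι n c : ℤ))) :
    tab (boxA ι n) s k j (occPos ι c t) =
      (if 1 ≤ i ∧ i ≤ k ∧ j i.toNat = c then 1 else 0)
        - (if 1 ≤ i + 1 ∧ i + 1 ≤ k ∧ j (i + 1).toNat = c + 1 then 1 else 0) := by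
  unfold tab
  simp only [Finset.sum_apply, boxA, Pi.sub_apply, xsj_occ hadm _ _ hc1 hc2 ht]
  rw [Finset.sum_sub_distrib]
  have key : ∀ (q : ℤ) (d : ℕ), (∑ x ∈ Finset.Icc 1 k, if j x = d ∧ (x : ℤ) = q then (1 : ℚ) else 0)
      = if 1 ≤ q ∧ q ≤ k ∧ j q.toNat = d then 1 else 0 := by
    intro q d
    by_cases h : 1 ≤ q ∧ q ≤ k
    · rw [Finset.sum_eq_single q.toNat]
      · have : ((q.toNat : ℕ) : ℤ) = q := by omega
        simp only [this, h.1, h.2, true_and, and_true]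
      · intro b _ hb
        rw [if_neg]
        omega
      · intro hb
        exfalso
        apply hb
        rw [Finset.mem_Icc]
        omega
    · rw [if_neg (by tauto)]
      apply Finset.sum_eq_zero
      intro x hx
      rw [Finset.mem_Icc] at hx
      rw [if_neg]
      omega
  rw [← key, ← key]
  congr 1
  · apply Finset.sum_congr rfl
    intro x hx
    congr 1
    apply propext
    constructor
    · rintro ⟨h1, h2⟩
      rw [h1] at h2
      exact ⟨h1, by omega⟩
    · rintro ⟨h1, h2⟩
      rw [h1]
      exact ⟨rfl, by omega⟩
  · apply Finset.sum_congr rfl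
    intro x hx
    rw [Finset.mem_Icc] at hx
    have := hj x hx.1 hx.2
    congr 1
    apply propext
    constructor
    · rintro ⟨h1, h2⟩
      rw [h1] at h2
      exact ⟨by omega, by omega⟩
    · rintro ⟨h1, h2⟩
      rw [h1, Nat.add_sub_cancel]
      exact ⟨rfl, by omega⟩

theorem TabA_base (hadm : Admissible n ι) {k : ℕ} (hk : 1 ≤ k) : xc k ∈ TabA ι n := by
  obtain ⟨t, ht, e⟩ := occPos_surj hadm hk
  obtain ⟨a, b⟩ := hadm.1 k hk
  refine ⟨ι k, t - (PABC ι n (ι k) : ℤ), fun i => i, a, b, ?_, ?_, ?_, ?_⟩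
  · intro i h1 h2
    exact ⟨h1, by show i ≤ n + 1; omega⟩
  · intro i h1 h2
    exact Nat.lt_succ_self i
  · omega
  · rw [tab_id _ _ b, sub_add_cancel]
    unfold xsj
    rw [if_pos (by omega), Int.toNat_natCast, e]

theorem TabA_step (hadm : Admissible n ι) (hadap : Adapted n (cartanA n) ι) {p : ℕ} (hp : 1 ≤ p)
    {φ : ℕ → ℚ} (h : φ ∈ TabA ι n) : Sop (cartanA n) ι p φ ∈ TabA ι n := by
  have h0 := h
  obtain ⟨k, s, j, hk1, hk2, hj, hmono, hs, rfl⟩ := h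
  obtain ⟨t, ht, e⟩ := occPos_surj hadm hp
  obtain ⟨hc1, hc2⟩ := hadm.1 p hp
  generalize ι p = c at *
  subst e
  obtain ⟨i, hi⟩ : ∃ i : ℤ, i = s + k - (t - (PABC ι n c : ℤ)) := ⟨_, rfl⟩
  have hco := tab_coeff hadm s k j (fun i a b => (hj i a b).1) hc1 hc2 ht i hi
  unfold Sop
  by_cases A1 : 1 ≤ i ∧ i ≤ k ∧ j i.toNat = c
  · by_cases A2 : 1 ≤ i + 1 ∧ i + 1 ≤ k ∧ j (i + 1).toNat = c + 1
    · rw [if_pos A1, if_pos A2, sub_self] at hco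
      rw [hco]
      simpa using h0
    · rw [if_pos A1, if_neg A2, sub_zero] at hco
      rw [hco, if_pos one_pos, one_smul]
      obtain ⟨q, rfl⟩ : ∃ q : ℕ, i = q := ⟨i.toNat, by omega⟩
      have eq1 : ((q : ℤ) + 1).toNat = q + 1 := by omega
      rw [eq1] at A2
      rw [Int.toNat_natCast] at A1
      obtain ⟨B1, B2, B3⟩ := A1
      refine ⟨k, s, Function.update j q (c + 1), hk1, hk2, ?_, ?_, hs, ?_⟩
      · intro r hr1 hr2
        by_cases hr : r = q
        · subst hr
          rw [Function.update_self]
          omega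
        · rw [Function.update_of_ne hr]
          exact hj r hr1 hr2
      · intro r hr1 hr2
        have := hmono r hr1 hr2
        by_cases hr : r = q
        · subst hr
          rw [Function.update_self, Function.update_of_ne (by omega)]
          omega
        · rw [Function.update_of_ne hr]
          by_cases hr' : r + 1 = q
          · subst hr'
            rw [Function.update_self]
            omega
          · rw [Function.update_of_ne hr']
            exact this
      · rw [tab_update _ _ _ _ (by omega) (by omega), B3,
          ← box_sub hadm hadap hc1 hc2 ht (m := s + k - q) (by omega)]
        abel
  · by_cases A2 : 1 ≤ i + 1 ∧ i + 1 ≤ k ∧ j (i + 1).toNat = c + 1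
    · rw [if_neg A1, if_pos A2, zero_sub] at hco
      rw [hco, if_neg (by norm_num)]
      obtain ⟨t, rfl⟩ : ∃ r, t = r + 1 := ⟨t - 1, by omega⟩
      rw [kminus_occ hadm hc1 hc2]
      rcases Nat.eq_zero_or_pos t with rfl | ht0
      · simpa [occPos, beta] using h0
      · obtain ⟨q, hq⟩ : ∃ q : ℕ, i = q := ⟨i.toNat, by omega⟩
        subst hq
        have eq1 : ((q : ℤ) + 1).toNat = q + 1 := by omega
        rw [eq1] at A2
        rw [Int.toNat_natCast] at A1
        obtain ⟨B1, B2, B3⟩ := A2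
        refine ⟨k, s, Function.update j (q + 1) c, hk1, hk2, ?_, ?_, hs, ?_⟩
        · intro r hr1 hr2
          by_cases hr : r = q + 1
          · subst hr
            rw [Function.update_self]
            omega
          · rw [Function.update_of_ne hr]
            exact hj r hr1 hr2
        · intro r hr1 hr2
          have := hmono r hr1 hr2
          by_cases hr : r = q + 1
          · subst hr
            rw [Function.update_self, Function.update_of_ne (by omega)]
            omega
          · rw [Function.update_of_ne hr]
            by_cases hr' : r = q
            · subst hr'
              rw [Function.update_self]
              omega
            · rw [Function.update_of_ne (by omega)]
              exact this
        · rw [tab_update _ _ _ _ (by omega) (by omega), B3,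
            ← box_sub hadm hadap hc1 hc2 ht0 (m := s + k - ((q + 1 : ℕ) : ℤ))
              (by push_cast at hi ⊢; omega)]
          rw [neg_one_smul]
          abel
    · rw [if_neg A1, if_neg A2, sub_self] at hco
      rw [hco]
      simpa using h0

theorem PABC_mono {a b : ℕ} (ha : 1 ≤ a) (hab : a ≤ b) (hb : b ≤ n) :
    PABC ι n a ≤ PABC ι n b ∧ PABC ι n b ≤ PABC ι n a + (b - a) := by
  induction b, hab using Nat.le_induction with
  | base => omega
  | succ b hab ih =>
    have := ih (by omega)
    have h := PABC_succ (ι := ι) (n := n) (show 1 ≤ b by omega) hb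
    have := pval_le (ι := ι) (b + 1) b
    omega

theorem Xi_of_tab (hadm : Admissible n ι) (hadap : Adapted n (cartanA n) ι) {k : ℕ} {s : ℤ}
    (hk1 : 1 ≤ k) (hk2 : k ≤ n) (hs : 1 - (PABC ι n k : ℤ) ≤ s) (N : ℕ) :
    ∀ j : ℕ → ℕ, (∀ i, 1 ≤ i → i ≤ k → 1 ≤ j i ∧ j i ≤ n + 1) →
      (∀ i, 1 ≤ i → i < k → j i < j (i + 1)) → (∑ i ∈ Finset.Icc 1 k, j i) = N →
      XiMem (cartanA n) ι (tab (boxA ι n) s k j) := by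
  induction N using Nat.strong_induction_on with
  | _ N IH =>
  intro j hj hmono hN
  by_cases hall : ∀ i, 1 ≤ i → i ≤ k → j i = i
  · have e : tab (boxA ι n) s k j = tab (boxA ι n) s k (fun i => i) := by
      unfold tab
      apply Finset.sum_congr rfl
      intro i hi
      rw [Finset.mem_Icc] at hi
      rw [hall i hi.1 hi.2]
    rw [e, tab_id _ _ hk2]
    unfold xsj
    rw [if_pos (by omega)]
    exact XiMem.base _ (occPos_pos hadm hk1 hk2 (by omega))
  · push Not at hall
    classical
    have hsp := Nat.find_spec hall
    have hmin : ∀ m, m < Nat.find hall → ¬ (1 ≤ m ∧ m ≤ k ∧ j m ≠ m) := fun m hm =>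
      Nat.find_min hall hm
    generalize Nat.find hall = q at hsp hmin
    obtain ⟨hq1, hq2, hq3⟩ := hsp
    have hprev : 2 ≤ q → j (q - 1) = q - 1 := by
      intro h
      by_contra hc
      exact hmin (q - 1) (by omega) ⟨by omega, by omega, hc⟩
    have hgt : q < j q := by
      have := hj q hq1 hq2
      by_cases h : 2 ≤ q
      · have h1 := hprev h
        have h2 := hmono (q - 1) (by omega) (by omega)
        rw [show q - 1 + 1 = q by omega] at h2
        omega
      · omega
    obtain ⟨c, hc⟩ : ∃ c, j q = c + 1 := ⟨j q - 1, by omega⟩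
    have hjq := hj q hq1 hq2
    have hc1 : 1 ≤ c := by omega
    have hc2 : c ≤ n := by omega
    have hj' : ∀ i, 1 ≤ i → i ≤ k →
        1 ≤ Function.update j q c i ∧ Function.update j q c i ≤ n + 1 := by
      intro r hr1 hr2
      by_cases hr : r = q
      · subst hr
        rw [Function.update_self]
        omega
      · rw [Function.update_of_ne hr]
        exact hj r hr1 hr2
    have hmono' : ∀ i, 1 ≤ i → i < k →
        Function.update j q c i < Function.update j q c (i + 1) := by
      intro r hr1 hr2
      have := hmono r hr1 hr2
      by_cases hr : r = q
      · subst hr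
        rw [Function.update_self, Function.update_of_ne (by omega)]
        omega
      · rw [Function.update_of_ne hr]
        by_cases hr' : r + 1 = q
        · subst hr'
          rw [Function.update_self]
          have := hprev (by omega)
          rw [Nat.add_sub_cancel] at this
          omega
        · rw [Function.update_of_ne hr']
          exact this
    have hq : q ∈ Finset.Icc 1 k := Finset.mem_Icc.2 ⟨hq1, hq2⟩
    have hlt : ∑ i ∈ Finset.Icc 1 k, Function.update j q c i < N := by
      rw [← hN]
      apply Finset.sum_lt_sum
      · intro r _
        by_cases hr : r = q
        · subst hr
          rw [Function.update_self]
          omega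
        · rw [Function.update_of_ne hr]
      · refine ⟨q, hq, ?_⟩
        rw [Function.update_self]
        omega
    have hX := IH _ hlt _ hj' hmono' rfl
    have hPq := PABC_mono (ι := ι) (n := n) hq1 hq2 hk2
    have hPc := PABC_mono (ι := ι) (n := n) hq1 (show q ≤ c by omega) hc2
    obtain ⟨t, ht⟩ : ∃ t : ℕ, s + k - q + (PABC ι n c : ℤ) = t :=
      ⟨(s + k - q + (PABC ι n c : ℤ)).toNat, by omega⟩
    have ht1 : 1 ≤ t := by omega
    have hco := tab_coeff hadm s k (Function.update j q c) (fun i a b => (hj' i a b).1)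
      hc1 hc2 ht1 q (by omega)
    have eq1 : ((q : ℤ) + 1).toNat = q + 1 := by omega
    rw [eq1, Int.toNat_natCast, Function.update_self, if_pos (by omega),
      Function.update_of_ne (by omega), if_neg, sub_zero] at hco
    · have hstep := XiMem.step (occPos ι c t) (occPos_pos hadm hc1 hc2 ht1) _ hX
      have e : Sop (cartanA n) ι (occPos ι c t) (tab (boxA ι n) s k (Function.update j q c))
          = tab (boxA ι n) s k j := by
        unfold Sop
        rw [hco, if_pos one_pos, one_smul, ← box_sub hadm hadap hc1 hc2 ht1 ht,
          tab_update _ _ _ _ hq1 hq2, hc]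
        abel
      rw [e] at hstep
      exact hstep
    · rintro ⟨_, h2, h3⟩
      have := hmono q hq1 (by omega)
      omega

end helpers

/-- Theorem 3.5 (type A): for an adapted sequence, `Ξ_ι = Tab_{A,ι}`. -/
theorem XiEqTabA (n : ℕ) (hn : 2 ≤ n) (ι : ℕ → ℕ)
    (hadm : Admissible n ι) (hadap : Adapted n (cartanA n) ι) :
    Xi (cartanA n) ι = TabA ι n := by
  ext φ
  constructor
  · intro h
    change XiMem (cartanA n) ι φ at h
    induction h with
    | base k hk => exact TabA_base hadm hk
    | step k hk φ h ih => exact TabA_step hadm hadap hk ih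
  · rintro ⟨k, s, j, hk1, hk2, hj, hmono, hs, rfl⟩
    exact Xi_of_tab hadm hadap hk1 hk2 hs _ j hj hmono rfl
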